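/- Gauss–Jacobi cubature for the Jacobi unitary ensemble: for α, β > −1 and every f ∈ ℙ^{(2m+1,n)}, (1/n!) ∫_{−1}^1⋯∫_{−1}^1 f(x) Π_{j=1}^n (1−x_j)^α(1+x_j)^β Π_{1≤j<k≤n}(x_j−x_k)² dx_1⋯dx_n = Σ_{λ̂ ∈ Λ^{(m,n)}} f(x_λ̂^{(m,n)}) W_λ̂, where W_λ̂ = ((2m+2n+1+α+β)/((m+n)(m+n+1+α+β)))^n Π_{j=1}^n (1−(x^{(m+n)}_{λ̂_j+n−j})²)^{−1} (p^{(α+1,β+1)}_{m+n−1}(x^{(m+n)}_{λ̂_j+n−j}))^{−2} · Π_{1≤j<k≤n}(x^{(m+n)}_{λ̂_j+n−j} − x^{(m+n)}_{λ̂_k+n−k})². -/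

import Mathlib

open MeasureTheory Real Finset

noncomputable section

/-- Vandermonde product `∏_{j<k} (x_j - x_k)`. -/
def vand (n : ℕ) (x : Fin n → ℝ) : ℝ :=
  ∏ j : Fin n, ∏ k ∈ Finset.univ.filter (fun k => j < k), (x j - x k)

/-- The fundamental alcove `Λ^{(m,n)}` : decreasing sequences with entries ≤ m. -/
def Lam (m n : ℕ) : Finset (Fin n → ℕ) :=
  (Fintype.piFinset fun _ => Finset.range (m + 1)).filter
    fun lam => ∀ i j : Fin n, i ≤ j → lam j ≤ lam i

/-- The node `x^{(m,n)}_λ̂` with `j`-th component `x^{(m+n)}_{λ̂_j + n - j}`. -/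
def node (n : ℕ) (xr : ℕ → ℝ) (lh : Fin n → ℕ) : Fin n → ℝ :=
  fun j => xr (lh j + (n - 1 - (j : ℕ)))

/-- The symmetric monomial `M_λ(x)`. -/
def msym (n : ℕ) (lam : Fin n → ℕ) : (Fin n → ℝ) → ℝ := fun x =>
  ∑ mu ∈ Finset.univ.image (fun σ : Equiv.Perm (Fin n) => lam ∘ σ), ∏ j : Fin n, x j ^ mu j

/-- The space `ℙ^{(m,n)}`: span of the symmetric monomials `M_λ`, `λ ∈ Λ^{(m,n)}`. -/
def pSpace (m n : ℕ) : Submodule ℝ ((Fin n → ℝ) → ℝ) :=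
  Submodule.span ℝ (msym n '' (Lam m n : Set (Fin n → ℕ)))

/-!
The polynomial `f * vand ^ 2` has degree at most `(2 m + 1) + 2 (n - 1) < 2 (m + n)` in each
variable, so it is integrated exactly by the `n`-fold tensor power of the one-dimensional
Gauss–Jacobi rule with `m + n` nodes. The resulting sum runs over all index tuples, is symmetric,
and vanishes at tuples with a repeated index, so it is `n!` times the sum over strictly decreasing
tuples. Subtracting the staircase `(n - 1, …, 1, 0)` identifies these with the partitions in
`Lam m n`.

The Gauss weights are computed algebraically. Let `L` be integration against a weight `w` with
`(σ w)' = τ w`. Integration by parts shows that the derivatives of the orthonormal polynomials for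
`L` are, up to a scalar, the orthonormal polynomials for `L (σ * ·)`. For the Jacobi weight,
`σ = 1 - X ^ 2`, and the latter are the polynomials with parameters `(α + 1, β + 1)`. If `ℓ` is the
Lagrange basis polynomial of a node and `P` the orthonormal polynomial vanishing at all nodes, then
computing `L (σ P' ℓ)`, corrected by a multiple of `X P ℓ` that lowers the degree, both by parts and
by the Gauss rule yields the weight of that node.
-/

section OrthonormalPolynomials

open Polynomial

variable {K : Type*} [Field K] {L : K[X] →ₗ[K] K} {p : Polynomial.Sequence K}

/-- `p` is an orthonormal polynomial sequence for the bilinear form `(g, h) ↦ L (g * h)`, where the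
functional `L` plays the role of integration against a weight. The sign of `p l` is left free. -/
def IsOrthonormalSequence (L : K[X] →ₗ[K] K) (p : Polynomial.Sequence K) : Prop :=
  ∀ l k, L (p l * p k) = if l = k then 1 else 0

namespace IsOrthonormalSequence

theorem apply_mul_of_natDegree_le (hp : IsOrthonormalSequence L p) {N : ℕ} {g : K[X]}
    (hg : g.natDegree ≤ N) : L (p N * g) = g.coeff N / (p N).leadingCoeff := by
  have hspan : g ∈ Submodule.span K (p '' Set.Iic N) := by
    rw [p.span_degreeLE fun i _ => by simp]
    exact mem_degreeLE.mpr (natDegree_le_iff_degree_le.mp hg)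
  clear hg
  induction hspan using Submodule.span_induction with
  | mem g hmem =>
    obtain ⟨l, hl, rfl⟩ := hmem
    rcases (Set.mem_Iic.mp hl).eq_or_lt with rfl | hlt
    · have hcoeff : (p l).coeff l = (p l).leadingCoeff := by rw [leadingCoeff, p.natDegree_eq]
      rw [hp, if_pos rfl, hcoeff, div_self (by simp)]
    · rw [hp, if_neg hlt.ne', coeff_eq_zero_of_natDegree_lt (by simpa using hlt), zero_div]
  | zero => simp
  | add g h _ _ hg hh => rw [mul_add, map_add, hg, hh, coeff_add, add_div]
  | smul c g _ hg => rw [mul_smul_comm, map_smul, hg, coeff_smul, smul_eq_mul, smul_eq_mul,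
      mul_div_assoc]

theorem apply_mul_of_natDegree_lt (hp : IsOrthonormalSequence L p) {N : ℕ} {g : K[X]}
    (hg : g.natDegree < N) : L (p N * g) = 0 := by
  rw [hp.apply_mul_of_natDegree_le hg.le, coeff_eq_zero_of_natDegree_lt hg, zero_div]

theorem eq_zero_of_apply_mul_natDegree (hp : IsOrthonormalSequence L p) {g : K[X]}
    (hg : L (p g.natDegree * g) = 0) : g = 0 := by
  rw [hp.apply_mul_of_natDegree_le le_rfl, div_eq_zero_iff] at hg
  simpa using hg

theorem eq_smul_of_forall_apply_mul_eq_zero (hp : IsOrthonormalSequence L p) {N : ℕ} {g : K[X]}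
    (hg : g.natDegree ≤ N) (horth : ∀ h : K[X], h.natDegree < N → L (g * h) = 0) :
    g = (g.coeff N / (p N).leadingCoeff) • p N := by
  set c := g.coeff N / (p N).leadingCoeff
  suffices horth' : ∀ k ≤ N, L (p k * (g - c • p N)) = 0 from
    sub_eq_zero.mp <| hp.eq_zero_of_apply_mul_natDegree <| horth' _ <|
      (natDegree_sub_le _ _).trans <| max_le hg ((natDegree_smul_le _ _).trans (by simp))
  intro k hk
  rw [mul_sub, mul_smul_comm, map_sub, map_smul, hp]
  rcases hk.eq_or_lt with rfl | hlt
  · rw [hp.apply_mul_of_natDegree_le hg, if_pos rfl, smul_eq_mul, mul_one, sub_self]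
  · rw [mul_comm, horth _ (by simpa using hlt), if_neg hlt.ne, smul_zero, sub_zero]

end IsOrthonormalSequence

end OrthonormalPolynomials

section GaussQuadrature

open Polynomial

variable {K ι : Type*} [Field K] {s : Finset ι} {v : ι → K}

theorem eq_C_leadingCoeff_mul_nodal {P : K[X]} (hv : Set.InjOn v s) (hdeg : P.degree = #s)
    (hroot : ∀ i ∈ s, P.eval (v i) = 0) : P = C P.leadingCoeff * Lagrange.nodal s v := by
  have hP : P.leadingCoeff ≠ 0 := by
    rw [Ne, leadingCoeff_eq_zero]
    rintro rfl
    simp at hdeg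
  have hdeg' : (C P.leadingCoeff * Lagrange.nodal s v).degree = #s := by
    rw [degree_C_mul hP, Lagrange.degree_nodal]
  refine eq_of_degree_le_of_eval_index_eq s hv hdeg.le (hdeg.trans hdeg'.symm) ?_ fun i hi => ?_
  · rw [leadingCoeff_mul_monic Lagrange.nodal_monic, leadingCoeff_C]
  · rw [hroot i hi, eval_mul, Lagrange.eval_nodal_at_node hi, mul_zero]

theorem apply_eq_sum_of_forall_apply_nodal_mul_eq_zero [DecidableEq ι] {L : K[X] →ₗ[K] K}
    (hv : Set.InjOn v s) (horth : ∀ h : K[X], h.natDegree < #s → L (Lagrange.nodal s v * h) = 0)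
    {g : K[X]} (hg : g.natDegree < 2 * #s) :
    L g = ∑ i ∈ s, g.eval (v i) * L (Lagrange.basis s v i) := by
  have hmonic : (Lagrange.nodal s v).Monic := Lagrange.nodal_monic
  have hquot : L (Lagrange.nodal s v * (g /ₘ Lagrange.nodal s v)) = 0 := by
    refine horth _ ?_
    rw [natDegree_divByMonic g hmonic, Lagrange.natDegree_nodal]
    lia
  have hrem : g %ₘ Lagrange.nodal s v = Lagrange.interpolate s v fun i => g.eval (v i) := by
    refine Lagrange.eq_interpolate_of_eval_eq _ hv ?_ fun i hi => ?_
    · simpa using degree_modByMonic_lt g hmonic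
    · exact eval₂_modByMonic_eq_self_of_root (Lagrange.eval_nodal_at_node hi)
  calc L g = L (g %ₘ Lagrange.nodal s v) := by
        conv_lhs => rw [← modByMonic_add_div g (Lagrange.nodal s v), map_add, hquot, add_zero]
    _ = ∑ i ∈ s, g.eval (v i) * L (Lagrange.basis s v i) := by
        simp only [hrem, Lagrange.interpolate_apply, map_sum, ← smul_eq_C_mul, map_smul,
          smul_eq_mul]

theorem IsOrthonormalSequence.apply_eq_sum_eval_mul_apply_basis [DecidableEq ι] {L : K[X] →ₗ[K] K}
    {p : Polynomial.Sequence K} (hp : IsOrthonormalSequence L p) (hv : Set.InjOn v s)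
    (hroot : ∀ i ∈ s, (p #s).eval (v i) = 0) {g : K[X]} (hg : g.natDegree < 2 * #s) :
    L g = ∑ i ∈ s, g.eval (v i) * L (Lagrange.basis s v i) := by
  refine apply_eq_sum_of_forall_apply_nodal_mul_eq_zero hv (fun h hh => ?_) hg
  have horth : (p #s).leadingCoeff * L (Lagrange.nodal s v * h) = 0 := by
    rw [← smul_eq_mul, ← map_smul, smul_eq_C_mul, ← mul_assoc,
      ← eq_C_leadingCoeff_mul_nodal hv (p.degree_eq _) hroot, hp.apply_mul_of_natDegree_lt hh]
  exact (mul_eq_zero.mp horth).resolve_left (by simp)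

theorem leadingCoeff_eq_eval_derivative_mul_coeff_basis [DecidableEq ι] {P : K[X]}
    (hv : Set.InjOn v s) (hdeg : P.degree = #s) (hroot : ∀ i ∈ s, P.eval (v i) = 0)
    {i : ι} (hi : i ∈ s) :
    P.leadingCoeff = P.derivative.eval (v i) * (Lagrange.basis s v i).coeff (#s - 1) := by
  have hcoeff : (Lagrange.basis s v i).coeff (#s - 1) = Lagrange.nodalWeight s v i := by
    rw [← Lagrange.natDegree_basis hv hi, coeff_natDegree, Lagrange.leadingCoeff_basis hv hi,
      Lagrange.nodalWeight, prod_inv_distrib]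
  have hnodal : (Lagrange.nodal s v).derivative.eval (v i) = (Lagrange.nodalWeight s v i)⁻¹ := by
    rw [Lagrange.nodalWeight_eq_eval_derivative_nodal hi, inv_inv]
  have hderiv : P.derivative.eval (v i) = P.leadingCoeff * (Lagrange.nodalWeight s v i)⁻¹ := by
    conv_lhs => rw [eq_C_leadingCoeff_mul_nodal hv hdeg hroot]
    rw [derivative_C_mul, eval_C_mul, hnodal]
  rw [hderiv, hcoeff, inv_mul_cancel_right₀ (Lagrange.nodalWeight_ne_zero hv hi)]

end GaussQuadrature

section Pearson

open Polynomial

variable {K ι : Type*} [Field K] {L : K[X] →ₗ[K] K} {σ τ : K[X]}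
  {p q : Polynomial.Sequence K} {s : Finset ι} {v : ι → K}

/-- The Pearson equation `(σ w)' = τ w` of a weight `w`, in the weak form in which it is seen by the
functional `L` of integration against `w`. With `σ` of degree at most `2` and `τ` of degree at most
`1`, it characterizes the classical weights (Jacobi, Laguerre, Hermite). -/
def IsPearson (L : K[X] →ₗ[K] K) (σ τ : K[X]) : Prop :=
  ∀ g : K[X], L (σ * derivative g + τ * g) = 0

theorem natDegree_derivative_le_of_natDegree_le {g : K[X]} {M : ℕ} (hg : g.natDegree ≤ M + 1) :
    (derivative g).natDegree ≤ M :=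
  (natDegree_derivative_le g).trans (Nat.sub_le_of_le_add hg)

theorem natDegree_mul_derivative_add_mul_le (hσ : σ.natDegree ≤ 2) (hτ : τ.natDegree ≤ 1)
    {M : ℕ} {g : K[X]} (hg : g.natDegree ≤ M) :
    (σ * derivative g + τ * g).natDegree ≤ M + 1 := by
  refine natDegree_add_le_of_degree_le ?_ ((natDegree_mul_le_of_le hτ hg).trans_eq (add_comm _ _))
  cases M with
  | zero => rw [eq_C_of_natDegree_le_zero hg]; simp
  | succ M =>
    exact (natDegree_mul_le_of_le hσ (natDegree_derivative_le_of_natDegree_le hg)).trans_eq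
      (by ring)

theorem coeff_mul_derivative_add_mul (hσ : σ.natDegree ≤ 2) (hτ : τ.natDegree ≤ 1)
    {M : ℕ} {g : K[X]} (hg : g.natDegree ≤ M) :
    (σ * derivative g + τ * g).coeff (M + 1) = (M * σ.coeff 2 + τ.coeff 1) * g.coeff M := by
  have hτg : (τ * g).coeff (M + 1) = τ.coeff 1 * g.coeff M := by
    rw [add_comm M, coeff_mul_add_eq_of_natDegree_le hτ hg]
  have hσg : (σ * derivative g).coeff (M + 1) = M * σ.coeff 2 * g.coeff M := by
    cases M with
    | zero => rw [eq_C_of_natDegree_le_zero hg]; simp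
    | succ M =>
      rw [show M + 1 + 1 = 2 + M by ring, coeff_mul_add_eq_of_natDegree_le hσ
        (natDegree_derivative_le_of_natDegree_le hg), coeff_derivative]
      push_cast
      ring
  rw [coeff_add, hσg, hτg]
  ring

/-- The combination of `σ * P'` and `X * P` in which the terms of degree `P.natDegree + 1` cancel.
At the roots of `P` it agrees with `σ * P'`, but one degree is saved, so that a Gauss rule can still
integrate its product with a Lagrange polynomial. -/
def reducedDerivative (σ P : K[X]) : K[X] :=
  σ * derivative P + C (-(P.natDegree * σ.coeff 2)) * X * P

theorem natDegree_reducedDerivative_le (hσ : σ.natDegree ≤ 2) (P : K[X]) :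
    (reducedDerivative σ P).natDegree ≤ P.natDegree := by
  have hlin : (C (-(P.natDegree * σ.coeff 2)) * X).natDegree ≤ 1 :=
    (natDegree_C_mul_le _ _).trans natDegree_X_le
  refine natDegree_le_pred (natDegree_mul_derivative_add_mul_le hσ hlin le_rfl) ?_
  rw [coeff_mul_derivative_add_mul hσ hlin le_rfl, coeff_C_mul, coeff_X_one]
  ring

namespace IsPearson

theorem apply_mul_derivative_mul (hL : IsPearson L σ τ) (hp : IsOrthonormalSequence L p)
    (hσ : σ.natDegree ≤ 2) (hτ : τ.natDegree ≤ 1) {M : ℕ} {g : K[X]} (hg : g.natDegree ≤ M) :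
    L (σ * (derivative (p (M + 1)) * g)) =
      -(M * σ.coeff 2 + τ.coeff 1) * (g.coeff M / (p (M + 1)).leadingCoeff) := by
  have hleibniz : σ * derivative (p (M + 1) * g) + τ * (p (M + 1) * g) =
      σ * (derivative (p (M + 1)) * g) + p (M + 1) * (σ * derivative g + τ * g) := by
    rw [derivative_mul]
    ring
  have hparts := hL (p (M + 1) * g)
  rw [hleibniz, map_add, hp.apply_mul_of_natDegree_le
    (natDegree_mul_derivative_add_mul_le hσ hτ hg), coeff_mul_derivative_add_mul hσ hτ hg] at hparts
  rw [eq_neg_of_add_eq_zero_left hparts]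
  ring

theorem derivative_eq_smul (hL : IsPearson L σ τ) (hp : IsOrthonormalSequence L p)
    (hq : IsOrthonormalSequence (L ∘ₗ LinearMap.mulLeft K σ) q)
    (hσ : σ.natDegree ≤ 2) (hτ : τ.natDegree ≤ 1) (M : ℕ) :
    derivative (p (M + 1)) =
      ((derivative (p (M + 1))).coeff M / (q M).leadingCoeff) • q M := by
  refine hq.eq_smul_of_forall_apply_mul_eq_zero
    (natDegree_derivative_le_of_natDegree_le (by simp)) fun h hh => ?_
  rw [LinearMap.comp_apply, LinearMap.mulLeft_apply, hL.apply_mul_derivative_mul hp hσ hτ hh.le,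
    coeff_eq_zero_of_natDegree_lt hh, zero_div, mul_zero]

theorem derivative_sq (hL : IsPearson L σ τ) (hp : IsOrthonormalSequence L p)
    (hq : IsOrthonormalSequence (L ∘ₗ LinearMap.mulLeft K σ) q)
    (hσ : σ.natDegree ≤ 2) (hτ : τ.natDegree ≤ 1) (M : ℕ) :
    derivative (p (M + 1)) ^ 2 = (-((M + 1) * (M * σ.coeff 2 + τ.coeff 1))) • q M ^ 2 := by
  have hderiv := hL.derivative_eq_smul hp hq hσ hτ M
  set P := p (M + 1) with hP
  set c := (derivative P).coeff M / (q M).leadingCoeff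
  have hcoeff : (derivative P).coeff M / P.leadingCoeff = M + 1 := by
    have hlead : P.coeff (M + 1) = P.leadingCoeff := by rw [leadingCoeff, hP, p.natDegree_eq]
    rw [coeff_derivative, hlead, mul_div_cancel_left₀ _ (by simp [hP])]
  have hnorm : L (σ * (derivative P * derivative P)) = c ^ 2 := by
    have hqq : L (σ * (q M * q M)) = 1 := by simpa using hq M M
    rw [hderiv, smul_mul_smul_comm, mul_smul_comm, map_smul, hqq, smul_eq_mul, mul_one, sq]
  have hparts := hL.apply_mul_derivative_mul hp hσ hτ (g := derivative P) (M := M)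
    (natDegree_derivative_le_of_natDegree_le (by simp [hP]))
  rw [← hP, hnorm, hcoeff] at hparts
  rw [hderiv, _root_.smul_pow, hparts, neg_mul, mul_comm]

theorem apply_reducedDerivative_mul (hL : IsPearson L σ τ) (hp : IsOrthonormalSequence L p)
    (hσ : σ.natDegree ≤ 2) (hτ : τ.natDegree ≤ 1) {M : ℕ} {g : K[X]} (hg : g.natDegree ≤ M) :
    L (reducedDerivative σ (p (M + 1)) * g) =
      -((2 * M + 1) * σ.coeff 2 + τ.coeff 1) * (g.coeff M / (p (M + 1)).leadingCoeff) := by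
  have hsplit : reducedDerivative σ (p (M + 1)) * g =
      σ * (derivative (p (M + 1)) * g) + (-((M + 1) * σ.coeff 2)) • (p (M + 1) * (X * g)) := by
    rw [reducedDerivative, p.natDegree_eq, Nat.cast_add_one, smul_eq_C_mul]
    ring
  have hXg : (X * g).natDegree ≤ M + 1 :=
    (natDegree_mul_le_of_le natDegree_X_le hg).trans_eq (add_comm _ _)
  rw [hsplit, map_add, map_smul, hL.apply_mul_derivative_mul hp hσ hτ hg,
    hp.apply_mul_of_natDegree_le hXg, coeff_X_mul, smul_eq_mul]
  ring

theorem eval_mul_eval_derivative_sq_mul_apply_basis [DecidableEq ι] (hL : IsPearson L σ τ)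
    (hp : IsOrthonormalSequence L p) (hσ : σ.natDegree ≤ 2) (hτ : τ.natDegree ≤ 1)
    (hv : Set.InjOn v s) {M : ℕ} (hs : #s = M + 1)
    (hroot : ∀ i ∈ s, (p (M + 1)).eval (v i) = 0) {i : ι} (hi : i ∈ s) :
    σ.eval (v i) * (derivative (p (M + 1))).eval (v i) ^ 2 * L (Lagrange.basis s v i) =
      -((2 * M + 1) * σ.coeff 2 + τ.coeff 1) := by
  set P := p (M + 1) with hP
  set ℓ := Lagrange.basis s v i
  have hℓ : ℓ.natDegree ≤ M := by rw [Lagrange.natDegree_basis hv hi, hs, Nat.add_sub_cancel]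
  have hdeg : (reducedDerivative σ P * ℓ).natDegree < 2 * #s := by
    have hPdeg : P.natDegree = M + 1 := p.natDegree_eq _
    have := natDegree_mul_le_of_le (natDegree_reducedDerivative_le hσ P) hℓ
    lia
  have hexact : L (reducedDerivative σ P * ℓ) =
      σ.eval (v i) * (derivative P).eval (v i) * L ℓ := by
    rw [hp.apply_eq_sum_eval_mul_apply_basis hv (hs ▸ hroot) hdeg,
      Finset.sum_eq_single_of_mem i hi]
    · simp [reducedDerivative, ℓ, hroot i hi, Lagrange.eval_basis_self hv hi]
    · intro j hj hji
      simp [ℓ, Lagrange.eval_basis_of_ne hji.symm hj]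
  have hlead : P.leadingCoeff = (derivative P).eval (v i) * ℓ.coeff M := by
    have := leadingCoeff_eq_eval_derivative_mul_coeff_basis hv (by rw [hs]; exact p.degree_eq _)
      hroot hi
    rwa [hs, Nat.add_sub_cancel] at this
  calc σ.eval (v i) * (derivative P).eval (v i) ^ 2 * L ℓ
      = (derivative P).eval (v i) * L (reducedDerivative σ P * ℓ) := by rw [hexact]; ring
    _ = -((2 * M + 1) * σ.coeff 2 + τ.coeff 1) *
          ((derivative P).eval (v i) * ℓ.coeff M / P.leadingCoeff) := by
        rw [hL.apply_reducedDerivative_mul hp hσ hτ hℓ]; ring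
    _ = -((2 * M + 1) * σ.coeff 2 + τ.coeff 1) := by
        rw [← hlead, div_self (by simp [hP]), mul_one]

theorem apply_eq_sum (hL : IsPearson L σ τ) (hp : IsOrthonormalSequence L p)
    (hq : IsOrthonormalSequence (L ∘ₗ LinearMap.mulLeft K σ) q)
    (hσ : σ.natDegree ≤ 2) (hτ : τ.natDegree ≤ 1) (hv : Set.InjOn v s) {M : ℕ} (hs : #s = M + 1)
    (hroot : ∀ i ∈ s, (p (M + 1)).eval (v i) = 0) (hne : (2 * M + 1) * σ.coeff 2 + τ.coeff 1 ≠ 0)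
    {g : K[X]} (hg : g.natDegree < 2 * (M + 1)) :
    L g = ∑ i ∈ s, g.eval (v i) *
      (((2 * M + 1) * σ.coeff 2 + τ.coeff 1) / ((M + 1) * (M * σ.coeff 2 + τ.coeff 1)) *
        ((σ.eval (v i))⁻¹ * ((q M).eval (v i) ^ 2)⁻¹)) := by
  classical
  rw [hp.apply_eq_sum_eval_mul_apply_basis hv (hs ▸ hroot) (hs ▸ hg)]
  refine Finset.sum_congr rfl fun i hi => congrArg _ ?_
  have hweight := hL.eval_mul_eval_derivative_sq_mul_apply_basis hp hσ hτ hv hs hroot hi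
  rw [← eval_pow, hL.derivative_sq hp hq hσ hτ, eval_smul, eval_pow, smul_eq_mul] at hweight
  generalize (2 * M + 1) * σ.coeff 2 + τ.coeff 1 = a at *
  generalize ((M : K) + 1) * (M * σ.coeff 2 + τ.coeff 1) = b at *
  generalize σ.eval (v i) = y at *
  generalize (q M).eval (v i) ^ 2 = z at *
  have hne' := neg_ne_zero.mpr hne
  rw [← hweight] at hne'
  obtain ⟨⟨hy, hb, hz⟩, -⟩ : (y ≠ 0 ∧ b ≠ 0 ∧ z ≠ 0) ∧ L (Lagrange.basis s v i) ≠ 0 := by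
    simpa only [mul_ne_zero_iff, neg_ne_zero] using hne'
  field_simp
  linear_combination -hweight

end IsPearson

end Pearson

section JacobiWeight

open Polynomial

variable {α β : ℝ}

/-- The weight `(1 - x)^α (1 + x)^β` of the Jacobi polynomials, to be used on `(-1, 1)` only. -/
def jacobiWeight (α β x : ℝ) : ℝ :=
  (1 - x) ^ α * (1 + x) ^ β

theorem jacobiWeight_add_one {x : ℝ} (hx : x ∈ Set.Ioo (-1) 1) :
    jacobiWeight (α + 1) (β + 1) x = (1 - x ^ 2) * jacobiWeight α β x := by
  have h₁ : 1 - x ≠ 0 := by linarith [hx.2]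
  have h₂ : 1 + x ≠ 0 := by linarith [hx.1]
  rw [jacobiWeight, jacobiWeight, rpow_add_one h₁, rpow_add_one h₂]
  ring

theorem intervalIntegrable_jacobiWeight (hα : -1 < α) (hβ : -1 < β) :
    IntervalIntegrable (jacobiWeight α β) volume (-1) 1 := by
  have hleft : IntervalIntegrable (fun x : ℝ => (1 + x) ^ β) volume (-1) 0 := by
    simpa using (intervalIntegral.intervalIntegrable_rpow' (a := 0) (b := 1) hβ).comp_add_left 1
  have hright : IntervalIntegrable (fun x : ℝ => (1 - x) ^ α) volume 0 1 := by
    simpa using (intervalIntegral.intervalIntegrable_rpow' (a := 1) (b := 0) hα).comp_sub_left 1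
  refine (hleft.continuousOn_mul ?_).trans (hright.mul_continuousOn ?_)
  · refine ContinuousOn.rpow_const (f := fun x : ℝ => 1 - x) (by fun_prop) fun x hx => Or.inl ?_
    rw [Set.uIcc_of_le (by norm_num)] at hx
    linarith [hx.2]
  · refine ContinuousOn.rpow_const (f := fun x : ℝ => 1 + x) (by fun_prop) fun x hx => Or.inl ?_
    rw [Set.uIcc_of_le (by norm_num)] at hx
    linarith [hx.1]

theorem integrableOn_eval_mul_jacobiWeight (hα : -1 < α) (hβ : -1 < β) (g : ℝ[X]) :
    IntegrableOn (fun x => g.eval x * jacobiWeight α β x) (Set.Ioo (-1) 1) := by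
  rw [← intervalIntegrable_iff_integrableOn_Ioo_of_le (by norm_num)]
  exact (intervalIntegrable_jacobiWeight hα hβ).continuousOn_mul g.continuous.continuousOn

/-- Integration of polynomials against the Jacobi weight. The bounds on `α` and `β` are arguments
because linearity rests on integrability. -/
def jacobiFunctional (hα : -1 < α) (hβ : -1 < β) : ℝ[X] →ₗ[ℝ] ℝ where
  toFun g := ∫ x in Set.Ioo (-1) 1, g.eval x * jacobiWeight α β x
  map_add' g h := by
    simp only [eval_add, add_mul]
    exact integral_add (integrableOn_eval_mul_jacobiWeight hα hβ g)
      (integrableOn_eval_mul_jacobiWeight hα hβ h)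
  map_smul' c g := by
    simp only [eval_smul, smul_eq_mul, mul_assoc, RingHom.id_apply, integral_const_mul]

theorem jacobiFunctional_apply (hα : -1 < α) (hβ : -1 < β) (g : ℝ[X]) :
    jacobiFunctional hα hβ g = ∫ x in Set.Ioo (-1) 1, g.eval x * jacobiWeight α β x :=
  rfl

theorem isOrthonormalSequence_jacobiFunctional_iff (hα : -1 < α) (hβ : -1 < β)
    {p : Polynomial.Sequence ℝ} :
    IsOrthonormalSequence (jacobiFunctional hα hβ) p ↔
      ∀ l k, ∫ x in Set.Ioo (-1) 1, (p l).eval x * (p k).eval x * ((1 - x) ^ α * (1 + x) ^ β) =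
        if l = k then 1 else 0 := by
  simp only [IsOrthonormalSequence, jacobiFunctional_apply, eval_mul, jacobiWeight]

theorem jacobiFunctional_add_one (hα : -1 < α) (hβ : -1 < β) (hα' : -1 < α + 1)
    (hβ' : -1 < β + 1) :
    jacobiFunctional hα' hβ' = jacobiFunctional hα hβ ∘ₗ LinearMap.mulLeft ℝ (1 - X ^ 2) := by
  refine LinearMap.ext fun g => setIntegral_congr_fun measurableSet_Ioo fun x hx => ?_
  simp only [jacobiWeight_add_one hx, LinearMap.mulLeft_apply, eval_mul, eval_sub, eval_one,
    eval_pow, eval_X]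
  ring

theorem hasDerivAt_eval_mul_jacobiWeight_add_one (g : ℝ[X]) {x : ℝ} (hx : x ∈ Set.Ioo (-1) 1) :
    HasDerivAt (fun x => g.eval x * jacobiWeight (α + 1) (β + 1) x)
      (((1 - X ^ 2) * derivative g + (C (β - α) - C (α + β + 2) * X) * g).eval x *
        jacobiWeight α β x) x := by
  have h₁ : 1 - x ≠ 0 := by linarith [hx.2]
  have h₂ : 1 + x ≠ 0 := by linarith [hx.1]
  have hderiv₁ : HasDerivAt (fun x : ℝ => (1 - x) ^ (α + 1)) (-1 * (α + 1) * (1 - x) ^ α) x := by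
    simpa using ((hasDerivAt_id x).const_sub 1).rpow_const (p := α + 1) (Or.inl h₁)
  have hderiv₂ : HasDerivAt (fun x : ℝ => (1 + x) ^ (β + 1)) (1 * (β + 1) * (1 + x) ^ β) x := by
    simpa using ((hasDerivAt_id x).const_add 1).rpow_const (p := β + 1) (Or.inl h₂)
  refine ((g.hasDerivAt x).mul (hderiv₁.mul hderiv₂)).congr_deriv ?_
  simp only [jacobiWeight, Pi.mul_apply, eval_add, eval_mul, eval_sub, eval_one, eval_pow, eval_X,
    eval_C, rpow_add_one h₁, rpow_add_one h₂]
  ring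

theorem continuous_jacobiWeight (hα : 0 ≤ α) (hβ : 0 ≤ β) : Continuous (jacobiWeight α β) :=
  ((continuous_const.sub continuous_id).rpow_const fun _ => Or.inr hα).mul
    ((continuous_const.add continuous_id).rpow_const fun _ => Or.inr hβ)

theorem isPearson_jacobiFunctional (hα : -1 < α) (hβ : -1 < β) :
    IsPearson (jacobiFunctional hα hβ) (1 - X ^ 2) (C (β - α) - C (α + β + 2) * X) := by
  intro g
  have hle : (-1 : ℝ) ≤ 1 := by norm_num
  have hcont : Continuous (jacobiWeight (α + 1) (β + 1)) :=
    continuous_jacobiWeight (by linarith) (by linarith)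
  have hone : jacobiWeight (α + 1) (β + 1) 1 = 0 := by
    rw [jacobiWeight, sub_self, zero_rpow (by linarith), zero_mul]
  have hneg_one : jacobiWeight (α + 1) (β + 1) (-1) = 0 := by
    rw [jacobiWeight, add_neg_cancel, zero_rpow (by linarith), mul_zero]
  rw [jacobiFunctional_apply, ← integral_Ioc_eq_integral_Ioo,
    ← intervalIntegral.integral_of_le hle, intervalIntegral.integral_eq_sub_of_hasDerivAt_of_le hle
      (g.continuous.mul hcont).continuousOn
      fun x hx => hasDerivAt_eval_mul_jacobiWeight_add_one g hx]
  · simp [hone, hneg_one]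
  · rw [intervalIntegrable_iff_integrableOn_Ioo_of_le hle]
    exact integrableOn_eval_mul_jacobiWeight hα hβ _

/-- The weight attached to a node `t` by the Gauss–Jacobi rule with `N` nodes, where `Q` is the
orthonormal polynomial of degree `N - 1` for the parameters `(α + 1, β + 1)`. -/
def christoffelNumber (α β : ℝ) (N : ℕ) (Q : ℝ[X]) (t : ℝ) : ℝ :=
  (2 * N + 1 + α + β) / (N * (N + 1 + α + β)) * ((1 - t ^ 2)⁻¹ * (Q.eval t ^ 2)⁻¹)

theorem jacobiFunctional_eq_sum (hα : -1 < α) (hβ : -1 < β) {p q : Polynomial.Sequence ℝ}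
    (hp : IsOrthonormalSequence (jacobiFunctional hα hβ) p)
    (hq : IsOrthonormalSequence
      (jacobiFunctional (α := α + 1) (β := β + 1) (by linarith) (by linarith)) q)
    {ι : Type*} {s : Finset ι} {v : ι → ℝ} (hv : Set.InjOn v s)
    (hroot : ∀ i ∈ s, (p #s).eval (v i) = 0) {g : ℝ[X]} (hg : g.natDegree < 2 * #s) :
    jacobiFunctional hα hβ g =
      ∑ i ∈ s, g.eval (v i) * christoffelNumber α β #s (q (#s - 1)) (v i) := by
  rw [jacobiFunctional_add_one hα hβ] at hq
  obtain ⟨M, hM⟩ : ∃ M, #s = M + 1 := Nat.exists_eq_add_one.mpr (by lia)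
  have hσ : (1 - X ^ 2 : ℝ[X]).natDegree ≤ 2 := by compute_degree
  have hτ : (C (β - α) - C (α + β + 2) * X).natDegree ≤ 1 := by compute_degree
  have hσ₂ : (1 - X ^ 2 : ℝ[X]).coeff 2 = -1 := by simp [coeff_one]
  have hτ₁ : (C (β - α) - C (α + β + 2) * X).coeff 1 = -(α + β + 2) := by simp [coeff_C]
  have hne : (2 * M + 1) * (1 - X ^ 2 : ℝ[X]).coeff 2 +
      (C (β - α) - C (α + β + 2) * X).coeff 1 ≠ 0 := by
    rw [hσ₂, hτ₁]
    linarith [(M.cast_nonneg : (0 : ℝ) ≤ M)]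
  rw [hM] at hroot hg ⊢
  rw [(isPearson_jacobiFunctional hα hβ).apply_eq_sum hp hq hσ hτ hv hM hroot hne hg, hσ₂, hτ₁]
  refine Finset.sum_congr rfl fun i _ => ?_
  have hratio : ((2 * M + 1) * -1 + -(α + β + 2)) / ((M + 1) * (M * -1 + -(α + β + 2))) =
      (2 * ↑(M + 1) + 1 + α + β) / (↑(M + 1) * (↑(M + 1) + 1 + α + β)) := by
    rw [← neg_div_neg_eq]
    push_cast
    ring
  rw [hratio, christoffelNumber, Nat.add_sub_cancel, eval_sub, eval_one, eval_pow, eval_X]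

end JacobiWeight

section Cubature

/-- The functions that a cubature rule with finite index set `s`, nodes `x` and weights `c`
integrates exactly against the measure `ν` with density `ρ`. Integrability is part of the condition,
which makes these functions a subspace. -/
def exactSpace {X κ : Type*} [MeasurableSpace X] (ν : Measure X) (ρ : X → ℝ) (s : Finset κ)
    (x : κ → X) (c : κ → ℝ) : Submodule ℝ (X → ℝ) where
  carrier := {F | Integrable (fun y => F y * ρ y) ν ∧
    ∫ y, F y * ρ y ∂ν = ∑ k ∈ s, F (x k) * c k}
  zero_mem' := by simp
  add_mem' := by
    rintro F G ⟨hFint, hF⟩ ⟨hGint, hG⟩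
    simp only [Set.mem_ofPred_eq, Pi.add_apply, add_mul]
    exact ⟨hFint.add hGint, by rw [integral_add hFint hGint, hF, hG, sum_add_distrib]⟩
  smul_mem' := by
    rintro a F ⟨hFint, hF⟩
    simp only [Set.mem_ofPred_eq, Pi.smul_apply, smul_eq_mul, mul_assoc]
    exact ⟨hFint.const_mul a, by rw [integral_const_mul, hF, mul_sum]⟩

theorem prod_mem_exactSpace {X κ ι : Type*} [MeasurableSpace X] [Fintype ι] [DecidableEq ι]
    {μ : Measure X} [SigmaFinite μ] {w : X → ℝ} {s : Finset κ} {x : κ → X} {c : κ → ℝ}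
    {φ : ι → X → ℝ} (hφ : ∀ j, φ j ∈ exactSpace μ w s x c) :
    (fun y : ι → X => ∏ j, φ j (y j)) ∈ exactSpace (Measure.pi fun _ => μ)
      (fun y => ∏ j, w (y j)) (Fintype.piFinset fun _ => s) (fun k j => x (k j))
      (fun k => ∏ j, c (k j)) := by
  refine ⟨?_, ?_⟩ <;> simp only [← prod_mul_distrib]
  · exact Integrable.fintype_prod (f := fun j y => φ j y * w y) fun j => (hφ j).1
  · rw [integral_fintype_prod_eq_prod fun j y => φ j y * w y,
      ← prod_univ_sum (fun _ => s) fun j k => φ j (x k) * c k]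
    exact prod_congr rfl fun j _ => (hφ j).2

end Cubature

section CoordDegree

variable {ι : Type*} [Fintype ι] {a b d : ℕ}

/-- The polynomial functions on `ι → ℝ` of degree at most `d` in each variable. -/
def coordDegreeLE (ι : Type*) [Fintype ι] (d : ℕ) : Submodule ℝ ((ι → ℝ) → ℝ) :=
  Submodule.span ℝ ((fun e y => ∏ j, y j ^ e j) '' {e : ι → ℕ | ∀ j, e j ≤ d})

theorem monomial_mem_coordDegreeLE {e : ι → ℕ} (he : ∀ j, e j ≤ d) :
    (fun y => ∏ j, y j ^ e j) ∈ coordDegreeLE ι d :=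
  Submodule.subset_span ⟨e, he, rfl⟩

theorem mul_mem_coordDegreeLE {F G : (ι → ℝ) → ℝ} (hF : F ∈ coordDegreeLE ι a)
    (hG : G ∈ coordDegreeLE ι b) : F * G ∈ coordDegreeLE ι (a + b) := by
  have hmul := Submodule.mul_mem_mul hF hG
  rw [coordDegreeLE, coordDegreeLE, Submodule.span_mul_span] at hmul
  refine Submodule.span_mono ?_ hmul
  rintro _ ⟨_, ⟨e, he, rfl⟩, _, ⟨e', he', rfl⟩, rfl⟩
  refine ⟨e + e', fun j => add_le_add (he j) (he' j), ?_⟩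
  ext y
  simp [pow_add, prod_mul_distrib]

theorem coordDegreeLE_le_exactSpace {κ : Type*} [DecidableEq ι] {μ : Measure ℝ} [SigmaFinite μ]
    {w : ℝ → ℝ} {s : Finset κ} {x : κ → ℝ} {c : κ → ℝ}
    (hpow : ∀ e ≤ d, (fun y => y ^ e) ∈ exactSpace μ w s x c) :
    coordDegreeLE ι d ≤ exactSpace (Measure.pi fun _ => μ) (fun y => ∏ j, w (y j))
      (Fintype.piFinset fun _ => s) (fun k j => x (k j)) (fun k => ∏ j, c (k j)) := by
  rw [coordDegreeLE, Submodule.span_le]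
  rintro _ ⟨e, he, rfl⟩
  exact prod_mem_exactSpace (φ := fun j y => y ^ e j) fun j => hpow (e j) (he j)

theorem det_vandermonde_mem_coordDegreeLE (n : ℕ) :
    (fun y => (Matrix.vandermonde y).det) ∈ coordDegreeLE (Fin n) (n - 1) := by
  have hexpand : (fun y : Fin n → ℝ => (Matrix.vandermonde y).det) =
      ∑ σ : Equiv.Perm (Fin n), ((σ.sign : ℤ) : ℝ) • fun y => ∏ j, y j ^ (σ j : ℕ) := by
    ext y
    simp [← Matrix.det_transpose (Matrix.vandermonde y), Matrix.det_apply']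
  rw [hexpand]
  exact sum_mem fun σ _ => Submodule.smul_mem _ _ <|
    monomial_mem_coordDegreeLE fun j => Nat.le_sub_one_of_lt (σ j).isLt

theorem mem_Lam {m n : ℕ} {lh : Fin n → ℕ} : lh ∈ Lam m n ↔ (∀ j, lh j ≤ m) ∧ Antitone lh := by
  simp only [Lam, mem_filter, Fintype.mem_piFinset, mem_range, Nat.lt_add_one_iff, Antitone]

theorem pSpace_le_coordDegreeLE (d n : ℕ) : pSpace d n ≤ coordDegreeLE (Fin n) d := by
  rw [pSpace, Submodule.span_le]
  rintro _ ⟨lam, hlam, rfl⟩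
  have hlam_le : ∀ j, lam j ≤ d := (mem_Lam.mp hlam).1
  have hsum : msym n lam =
      ∑ mu ∈ univ.image (fun σ : Equiv.Perm (Fin n) => lam ∘ σ), fun y => ∏ j, y j ^ mu j := by
    ext y
    simp only [msym, Finset.sum_apply]
  rw [hsum]
  refine sum_mem fun mu hmu => ?_
  obtain ⟨σ, -, rfl⟩ := mem_image.mp hmu
  exact monomial_mem_coordDegreeLE fun j => hlam_le (σ j)

end CoordDegree

section Symmetry

variable {n : ℕ}

theorem vand_sq_eq_det_vandermonde_sq (x : Fin n → ℝ) :
    vand n x ^ 2 = (Matrix.vandermonde x).det ^ 2 := by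
  simp only [Matrix.det_vandermonde, vand, ← prod_pow]
  exact prod_congr rfl fun j _ => prod_congr (by ext; simp) fun k _ => sub_sq_comm _ _

theorem vand_comp_perm_sq (x : Fin n → ℝ) (σ : Equiv.Perm (Fin n)) :
    vand n (x ∘ σ) ^ 2 = vand n x ^ 2 := by
  have hsubmatrix : Matrix.vandermonde (x ∘ σ) = (Matrix.vandermonde x).submatrix σ id := by
    ext i j
    simp [Matrix.vandermonde_apply]
  have hsign : ((σ.sign : ℤ) : ℝ) ^ 2 = 1 := by
    rcases Int.units_eq_one_or σ.sign with h | h <;> simp [h]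
  rw [vand_sq_eq_det_vandermonde_sq, vand_sq_eq_det_vandermonde_sq, hsubmatrix, Matrix.det_permute,
    mul_pow, hsign, one_mul]

theorem vand_sq_eq_zero_of_not_injective {x : Fin n → ℝ} (hx : ¬ Function.Injective x) :
    vand n x ^ 2 = 0 := by
  rw [vand_sq_eq_det_vandermonde_sq, not_not.mp (mt Matrix.det_vandermonde_ne_zero_iff.mp hx),
    zero_pow two_ne_zero]

theorem msym_comp_perm (lam : Fin n → ℕ) (x : Fin n → ℝ) (σ : Equiv.Perm (Fin n)) :
    msym n lam (x ∘ σ) = msym n lam x := by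
  let orbit := univ.image fun τ : Equiv.Perm (Fin n) => lam ∘ τ
  have horbit : ∀ ρ : Equiv.Perm (Fin n), ∀ mu ∈ orbit, mu ∘ ρ ∈ orbit := by
    intro ρ mu hmu
    obtain ⟨τ, -, rfl⟩ := mem_image.mp hmu
    exact mem_image_of_mem (fun τ : Equiv.Perm (Fin n) => lam ∘ τ) (mem_univ (τ * ρ))
  refine sum_nbij' (· ∘ σ.symm) (· ∘ σ) (horbit _) (horbit _) ?_ ?_ fun mu _ => ?_
  · intro mu _
    ext
    simp
  · intro mu _
    ext
    simp
  · rw [← Equiv.prod_comp σ fun j => x j ^ (mu ∘ σ.symm) j]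
    simp

theorem apply_comp_perm_of_mem_pSpace {d : ℕ} {f : (Fin n → ℝ) → ℝ} (hf : f ∈ pSpace d n)
    (x : Fin n → ℝ) (σ : Equiv.Perm (Fin n)) : f (x ∘ σ) = f x := by
  induction hf using Submodule.span_induction with
  | mem f hmem =>
    obtain ⟨lam, -, rfl⟩ := hmem
    exact msym_comp_perm lam x σ
  | zero => rfl
  | add f g _ _ hf hg => simp only [Pi.add_apply, hf, hg]
  | smul c f _ hf => simp only [Pi.smul_apply, hf]

end Symmetry

section Symmetrization

variable {n : ℕ} {A M : Type*} [LinearOrder A] [AddCommMonoid M]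

theorem exists_perm_strictAnti_comp {κ : Fin n → A} (hκ : Function.Injective κ) :
    ∃ σ : Equiv.Perm (Fin n), StrictAnti (κ ∘ σ) := by
  refine ⟨Tuple.sort (OrderDual.toDual ∘ κ), Antitone.strictAnti_of_injective ?_ ?_⟩
  · exact fun i j hij => Tuple.monotone_sort (OrderDual.toDual ∘ κ) hij
  · exact hκ.comp (Equiv.injective _)

theorem eq_of_strictAnti_comp_perm_eq {κ κ' : Fin n → A} {σ σ' : Equiv.Perm (Fin n)}
    (hκ : StrictAnti κ) (hκ' : StrictAnti κ') (h : κ ∘ σ = κ' ∘ σ') : κ = κ' ∧ σ = σ' := by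
  obtain rfl : κ = κ' := by
    rw [← hκ.range_inj hκ', ← σ.surjective.range_comp, h, σ'.surjective.range_comp]
  exact ⟨rfl, Equiv.ext fun i => hκ.injective (congrFun h i)⟩

open Classical in
theorem sum_piFinset_eq_factorial_nsmul_sum_strictAnti (s : Finset A) {G : (Fin n → A) → M}
    (hsymm : ∀ κ (σ : Equiv.Perm (Fin n)), G (κ ∘ σ) = G κ)
    (hzero : ∀ κ, ¬ Function.Injective κ → G κ = 0) :
    ∑ κ ∈ Fintype.piFinset (fun _ : Fin n => s), G κ =
      n.factorial • ∑ κ ∈ Fintype.piFinset (fun _ => s) with StrictAnti κ, G κ := by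
  have hpairs : n.factorial • ∑ κ ∈ Fintype.piFinset (fun _ => s) with StrictAnti κ, G κ =
      ∑ x ∈ {κ ∈ Fintype.piFinset (fun _ : Fin n => s) | StrictAnti κ} ×ˢ
        (univ : Finset (Equiv.Perm (Fin n))), G (x.1 ∘ x.2) := by
    simp only [hsymm, sum_product, sum_const, card_univ, Fintype.card_perm, Fintype.card_fin,
      smul_sum]
  rw [hpairs, ← sum_filter_of_ne (p := Function.Injective) fun κ _ => not_imp_comm.mp (hzero κ)]
  symm
  refine sum_nbij (fun x => x.1 ∘ x.2) ?_ ?_ ?_ fun _ _ => rfl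
  · rintro ⟨κ, σ⟩ h
    simp only [mem_product, mem_filter, Fintype.mem_piFinset, mem_univ, and_true] at h ⊢
    exact ⟨fun j => h.1 (σ j), h.2.injective.comp σ.injective⟩
  · rintro ⟨κ, σ⟩ h ⟨κ', σ'⟩ h' heq
    simp only [coe_product, Set.mem_prod, mem_coe, mem_filter] at h h'
    obtain ⟨rfl, rfl⟩ := eq_of_strictAnti_comp_perm_eq h.1.2 h'.1.2 heq
    rfl
  · intro κ hκ
    simp only [mem_coe, mem_filter, Fintype.mem_piFinset] at hκ
    obtain ⟨σ, hσ⟩ := exists_perm_strictAnti_comp hκ.2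
    refine ⟨(κ ∘ σ, σ⁻¹), ?_, by ext; simp⟩
    simpa [hσ] using fun j => hκ.1 (σ j)

theorem strictAnti_iff_antitone_add_val {a : Fin n → ℕ} :
    StrictAnti a ↔ Antitone fun j => a j + j := by
  cases n with
  | zero => exact ⟨fun _ => Subsingleton.antitone _, fun _ => Subsingleton.strictAnti _⟩
  | succ n =>
    rw [Fin.strictAnti_iff_succ_lt, Fin.antitone_iff_succ_le]
    refine forall_congr' fun i => ?_
    simp only [Fin.val_succ, Fin.val_castSucc]
    lia

theorem strictAnti_add_sub_val_iff {lh : Fin n → ℕ} :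
    StrictAnti (fun j => lh j + (n - 1 - (j : ℕ))) ↔ Antitone lh := by
  have hshift : (fun j : Fin n => lh j + (n - 1 - (j : ℕ)) + j) = fun j => lh j + (n - 1) := by
    ext j
    lia
  rw [strictAnti_iff_antitone_add_val, hshift]
  simp only [Antitone, add_le_add_iff_right]

theorem sub_val_le_of_strictAnti {a : Fin n → ℕ} (ha : StrictAnti a) (j : Fin n) :
    n - 1 - (j : ℕ) ≤ a j := by
  have hlast : a ⟨n - 1, Nat.sub_one_lt_of_lt j.isLt⟩ + (n - 1) ≤ a j + j :=
    strictAnti_iff_antitone_add_val.mp ha (Nat.le_sub_one_of_lt j.isLt)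
  lia

theorem add_val_le_of_strictAnti {a : Fin n → ℕ} {N : ℕ} (ha : StrictAnti a) (hN : ∀ j, a j ≤ N)
    (j : Fin n) : a j + j ≤ N := by
  have hfirst : a j + j ≤ a ⟨0, j.pos⟩ + 0 :=
    strictAnti_iff_antitone_add_val.mp ha (Nat.zero_le j)
  exact hfirst.trans (hN _)

open Classical in
theorem sum_strictAnti_eq_sum_Lam (m : ℕ) (G : (Fin n → ℕ) → M) :
    ∑ κ ∈ Fintype.piFinset (fun _ => range (m + n)) with StrictAnti κ, G κ =
      ∑ lh ∈ Lam m n, G fun j => lh j + (n - 1 - (j : ℕ)) := by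
  have hcancel : ∀ κ : Fin n → ℕ, StrictAnti κ →
      (fun j => κ j - (n - 1 - (j : ℕ)) + (n - 1 - (j : ℕ))) = κ := fun κ hκ =>
    funext fun j => Nat.sub_add_cancel (sub_val_le_of_strictAnti hκ j)
  symm
  refine sum_nbij' (fun lh j => lh j + (n - 1 - (j : ℕ))) (fun κ j => κ j - (n - 1 - (j : ℕ)))
    (fun lh hlh => ?_) (fun κ hκ => ?_) (fun lh _ => by simp) (fun κ hκ => ?_) fun _ _ => rfl
  · obtain ⟨hle, hanti⟩ := mem_Lam.mp hlh
    refine mem_filter.mpr ⟨Fintype.mem_piFinset.mpr fun j => mem_range.mpr ?_,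
      strictAnti_add_sub_val_iff.mpr hanti⟩
    have := hle j
    lia
  · obtain ⟨hmem, hanti⟩ := mem_filter.mp hκ
    have hlt : ∀ j, κ j < m + n := by simpa using hmem
    refine mem_Lam.mpr ⟨fun j => ?_, ?_⟩
    · have := add_val_le_of_strictAnti hanti (fun i => Nat.le_sub_one_of_lt (hlt i)) j
      lia
    · rwa [← strictAnti_add_sub_val_iff, hcancel κ hanti]
  · exact hcancel κ (mem_filter.mp hκ).2

end Symmetrization

section EnsembleCubature

theorem integral_mul_vand_sq_eq_factorial_mul_sum_Lam {n : ℕ} {μ : Measure ℝ} [SigmaFinite μ]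
    {w : ℝ → ℝ} {x c : ℕ → ℝ} {d m : ℕ}
    (hpow : ∀ e ≤ d + ((n - 1) + (n - 1)),
      (fun y => y ^ e) ∈ exactSpace μ w (range (m + n)) x c)
    {f : (Fin n → ℝ) → ℝ} (hf : f ∈ pSpace d n) :
    ∫ y, f y * vand n y ^ 2 * ∏ j, w (y j) ∂Measure.pi (fun _ : Fin n => μ) =
      n.factorial * ∑ lh ∈ Lam m n, f (node n x lh) * vand n (node n x lh) ^ 2 *
        ∏ j, c (lh j + (n - 1 - (j : ℕ))) := by
  have hmem : (fun y => f y * vand n y ^ 2) ∈ coordDegreeLE (Fin n) (d + ((n - 1) + (n - 1))) := by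
    have hsq : (fun y => f y * vand n y ^ 2) =
        f * ((fun y => (Matrix.vandermonde y).det) * fun y => (Matrix.vandermonde y).det) := by
      ext y
      rw [vand_sq_eq_det_vandermonde_sq, sq, Pi.mul_apply, Pi.mul_apply]
    rw [hsq]
    exact mul_mem_coordDegreeLE (pSpace_le_coordDegreeLE d n hf) <| mul_mem_coordDegreeLE
      (det_vandermonde_mem_coordDegreeLE n) (det_vandermonde_mem_coordDegreeLE n)
  rw [(coordDegreeLE_le_exactSpace hpow hmem).2, sum_piFinset_eq_factorial_nsmul_sum_strictAnti,
    sum_strictAnti_eq_sum_Lam, nsmul_eq_mul]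
  · rfl
  · intro κ σ
    exact congr_arg₂ (· * ·) (congr_arg₂ (· * ·) (apply_comp_perm_of_mem_pSpace hf (x ∘ κ) σ)
      (vand_comp_perm_sq (x ∘ κ) σ)) (Equiv.prod_comp σ fun j => c (κ j))
  · intro κ hκ
    have hvand : vand n (x ∘ κ) ^ 2 = 0 :=
      vand_sq_eq_zero_of_not_injective (mt Function.Injective.of_comp hκ)
    exact mul_eq_zero_of_left (mul_eq_zero_of_right _ hvand) _

open Polynomial in
theorem eval_mem_exactSpace_jacobiWeight {α β : ℝ} (hα : -1 < α) (hβ : -1 < β)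
    {p q : Polynomial.Sequence ℝ} (hp : IsOrthonormalSequence (jacobiFunctional hα hβ) p)
    (hq : IsOrthonormalSequence
      (jacobiFunctional (α := α + 1) (β := β + 1) (by linarith) (by linarith)) q)
    {κ : Type*} {s : Finset κ} {x : κ → ℝ} (hx : Set.InjOn x s)
    (hroot : ∀ k ∈ s, (p #s).eval (x k) = 0) {g : ℝ[X]} (hg : g.natDegree < 2 * #s) :
    (fun y => g.eval y) ∈ exactSpace (volume.restrict (Set.Ioo (-1) 1)) (jacobiWeight α β) s x
      fun k => christoffelNumber α β #s (q (#s - 1)) (x k) :=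
  ⟨integrableOn_eval_mul_jacobiWeight hα hβ g, jacobiFunctional_eq_sum hα hβ hp hq hx hroot hg⟩

theorem prod_christoffelNumber {ι : Type*} [Fintype ι] (α β : ℝ) (N : ℕ) (Q : Polynomial ℝ)
    (t : ι → ℝ) :
    ∏ j, christoffelNumber α β N Q (t j) =
      ((2 * N + 1 + α + β) / (N * (N + 1 + α + β))) ^ Fintype.card ι *
        ∏ j, (1 - t j ^ 2)⁻¹ * (Q.eval (t j) ^ 2)⁻¹ := by
  simp only [christoffelNumber, prod_mul_distrib, prod_const, card_univ]

end EnsembleCubature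

theorem gauss_jacobi_cubature_JUE
    (n : ℕ) (hn : 0 < n) (m : ℕ)
    (α β : ℝ) (hα : -1 < α) (hβ : -1 < β)
    -- the normalized Jacobi polynomials p^{(α,β)}: orthonormal w.r.t. (1-x)^α (1+x)^β on (-1,1)
    (p : ℕ → Polynomial ℝ)
    (hdeg : ∀ l, (p l).degree = l)
    (hlead : ∀ l, 0 < (p l).leadingCoeff)
    (horth : ∀ l k, (∫ x in Set.Ioo (-1 : ℝ) 1,
        (p l).eval x * (p k).eval x * ((1 - x) ^ α * (1 + x) ^ β))
      = if l = k then 1 else 0)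
    -- the normalized Jacobi polynomials p^{(α+1,β+1)}
    (q : ℕ → Polynomial ℝ)
    (hqdeg : ∀ l, (q l).degree = l)
    (hqlead : ∀ l, 0 < (q l).leadingCoeff)
    (hqorth : ∀ l k, (∫ x in Set.Ioo (-1 : ℝ) 1,
        (q l).eval x * (q k).eval x * ((1 - x) ^ (α + 1) * (1 + x) ^ (β + 1)))
      = if l = k then 1 else 0)
    -- the ordered roots of p^{(α,β)}_{m+n} in (-1,1)
    (xr : ℕ → ℝ)
    (hxr_mem : ∀ l < m + n, xr l ∈ Set.Ioo (-1 : ℝ) 1)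
    (hxr_mono : ∀ k l : ℕ, k < l → l < m + n → xr k < xr l)
    (hxr_root : ∀ l < m + n, (p (m + n)).eval (xr l) = 0)
    -- a symmetric polynomial of degree at most 2m+1 in each variable
    (f : (Fin n → ℝ) → ℝ)
    (hf : f ∈ pSpace (2 * m + 1) n) :
    (1 / (n.factorial : ℝ)) *
      (∫ x : Fin n → ℝ in Set.univ.pi (fun _ => Set.Ioo (-1 : ℝ) 1),
        f x * (∏ j, (1 - x j) ^ α * (1 + x j) ^ β) * vand n x ^ 2)
    = ∑ lh ∈ Lam m n,
        f (node n xr lh) *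
          (((2 * m + 2 * n + 1 + α + β) / (((m : ℝ) + n) * ((m : ℝ) + n + 1 + α + β))) ^ n *
            (∏ j : Fin n, (1 - (xr (lh j + (n - 1 - (j : ℕ)))) ^ 2)⁻¹ *
              (((q (m + n - 1)).eval (xr (lh j + (n - 1 - (j : ℕ))))) ^ 2)⁻¹) *
            vand n (node n xr lh) ^ 2) := by
  let P : Polynomial.Sequence ℝ := ⟨p, hdeg⟩
  let Q : Polynomial.Sequence ℝ := ⟨q, hqdeg⟩
  have hP : IsOrthonormalSequence (jacobiFunctional hα hβ) P :=
    (isOrthonormalSequence_jacobiFunctional_iff hα hβ).mpr horth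
  have hQ : IsOrthonormalSequence
      (jacobiFunctional (α := α + 1) (β := β + 1) (by linarith) (by linarith)) Q :=
    (isOrthonormalSequence_jacobiFunctional_iff _ _).mpr hqorth
  have hinj : Set.InjOn xr (range (m + n)) :=
    StrictMonoOn.injOn fun k _ l hl hkl => hxr_mono k l hkl (mem_range.mp hl)
  have hpow : ∀ e ≤ 2 * m + 1 + ((n - 1) + (n - 1)),
      (fun y => y ^ e) ∈ exactSpace (volume.restrict (Set.Ioo (-1) 1)) (jacobiWeight α β)
        (range (m + n)) xr fun k => christoffelNumber α β (m + n) (q (m + n - 1)) (xr k) := by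
    intro e he
    simpa [P, Q] using eval_mem_exactSpace_jacobiWeight hα hβ hP hQ hinj (by simpa using hxr_root)
      (g := Polynomial.X ^ e) (by simp; lia)
  have hcub := integral_mul_vand_sq_eq_factorial_mul_sum_Lam hpow hf
  rw [← Measure.restrict_pi_pi, ← volume_pi] at hcub
  simp only [jacobiWeight, mul_right_comm (f _) (vand n _ ^ 2)] at hcub
  rw [hcub, one_div, inv_mul_cancel_left₀ (by positivity)]
  refine sum_congr rfl fun lh _ => ?_
  rw [prod_christoffelNumber, Fintype.card_fin]
  push_cast
  ring

end
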